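/- (Berry–Esseen type estimate.) Assume Γ(0) ≠ Γ(1) and 1 + ρ·ln(Γ(1)^{μ(1)} Γ(0)^{μ(0)}) > 0 for some ρ > 0, and let n ↦ L_n be a ρ-admissible scaling with associated sequence ρ_n. There exists a universal constant C* > 0 such that for every n ≥ 2, every δ ∈ (0,1) and every η ∈ (0, μ(1)): sup_{x ≥ 0} |Δ_n(x)| ≤ (1/√(2π σ² L_n)) · ln( ((1+δ)/(1−δ)) · (n/(n−1)) ) + (3C*/√L_n) · (μ(1)² + μ(0)²)/√(μ(1)μ(0)) + 4 e^{−2 L_n η²} + 2 exp( −Ψ(δ) · (n−1) (Γ(1)^{μ(1)+η} Γ(0)^{μ(0)+η})^{L_n} ), where for each n ≥ 2 the pair (D_n, S_n) is a compound-binomial degree pair with parameters (n, L_n) and Δ_n(x) = P( (D_n)^{1/√L_n} exp(−√L_n (1/ρ_n + ln(Γ(1)^{μ(1)} Γ(0)^{μ(0)}))) ≤ x ) − P( (Γ(1)/Γ(0))^{σ₀ Z} ≤ x ). -/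

import Mathlib

/-!
Write `p = μ(1)`. Given `S = ℓ`, the degree `D` is binomial with `n - 1` trials and success probability
`Γ(1)^ℓ Γ(0)^(L - ℓ)`, so it is close to its conditional mean. The proof replaces `D` by
`(1 ± δ) (n - 1) Γ(1)^S Γ(0)^(L - S)`. By the Chernoff bound (`binom_chernoff`) this costs
`2 exp (-Ψ(δ) (n - 1) R)` as soon as the success probability is at least `R`. With
`R = (Γ(1)^(p + η) Γ(0)^(1 - p + η))^L` this holds when `|S - L p| ≤ L η` (`typical_lower_bound`), and
the other values of `S` have probability at most `2 exp (-2 L η ^ 2)` by Hoeffding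
(`binom_hoeffding`). Both errors are collected in `unconditional_bounds`.

The logarithm of the replacement is affine in the binomial variable `S`, so its law is compared with the
Gaussian one by the Berry–Esseen bound for the binomial law (`binom_berry_esseen_scaled`). The
constants `1 ± δ` and `(n - 1) / n` move the endpoint of the half-line by at most
`log ((1 + δ) / (1 - δ) * (n / (n - 1))) / √L`, and the Lipschitz bound on `Φ` turns this into the
first term (`shifted_comparison`).

The binomial Berry–Esseen bound is proved by the method of Stein. The identity `bExp_stein` says that
adding an independent uniform variable on a lattice step to a binomial variable with one trial fewer
gives the zero-bias transform. This variable is within one lattice step `1 / s` of the original, `s` being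
the standard deviation, and the bounds on the solution `steinF` of the Stein equation give an error of
order `1 / s` (`zero_bias_bound`). The shift from the zero-bias variable back to the original costs
another `1 / s` (`binom_berry_esseen`). The universal constant is `6`.
-/

open MeasureTheory ProbabilityTheory Filter Real
open scoped ENNReal NNReal

noncomputable section

/-- A compound-binomial degree pair `(D, S)` with parameters `(n, L)`:
`S` is Binomial(L, μ1) and, conditionally on `S = ℓ`, `D` is
Binomial(n-1, Γ1^ℓ Γ0^(L-ℓ)); equivalently the joint pmf is as below. -/
def IsCompoundBinomialPair {Ω : Type*} [MeasurableSpace Ω] (P : Measure Ω)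
    (μ1 μ0 Γ1 Γ0 : ℝ) (n L : ℕ) (D S : Ω → ℕ) : Prop :=
  Measurable D ∧ Measurable S ∧
    ∀ d ≤ n - 1, ∀ ℓ ≤ L,
      P {ω | D ω = d ∧ S ω = ℓ} =
        ENNReal.ofReal ((L.choose ℓ : ℝ) * μ1 ^ ℓ * μ0 ^ (L - ℓ) *
          ((n - 1).choose d : ℝ) * (Γ1 ^ ℓ * Γ0 ^ (L - ℓ)) ^ d *
          (1 - Γ1 ^ ℓ * Γ0 ^ (L - ℓ)) ^ (n - 1 - d))

/-- A scaling `n ↦ L n` is `ρ`-admissible if `L n ~ ρ ln n` as `n → ∞`. -/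
def IsAdmissible (ρ : ℝ) (L : ℕ → ℕ) : Prop :=
  (∀ n, 0 < L n) ∧
    Tendsto (fun n => (L n : ℝ) / (ρ * Real.log n)) atTop (nhds 1)

/-- `Ψ(x) = (x+1) ln(x+1) - x`. -/
def Psi (x : ℝ) : ℝ := (x + 1) * Real.log (x + 1) - x

/-- The standard Gaussian distribution function. -/
def Phi (z : ℝ) : ℝ := ∫ t in Set.Iic z, Real.exp (-t ^ 2 / 2) / Real.sqrt (2 * Real.pi)

universe u

/-! ### Expectations under a binomial law -/

/-- The expectation `E[f(K)]` for `K` binomial with `L` trials and success probability `p`, written as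
a finite sum. It is defined for every real `p`; positivity needs `0 ≤ p ≤ 1`. -/
def bExp (p : ℝ) (L : ℕ) (f : ℕ → ℝ) : ℝ :=
  ∑ k ∈ Finset.range (L + 1), (L.choose k : ℝ) * p ^ k * (1 - p) ^ (L - k) * f k

/-- The probability generating function of the binomial law. -/
lemma bExp_pow (p : ℝ) (L : ℕ) (x : ℝ) :
    bExp p L (fun k => x ^ k) = (1 - p + p * x) ^ L := by
  rw [add_comm, add_pow, bExp]
  refine Finset.sum_congr rfl fun k _ => ?_
  rw [mul_pow]; ring

lemma bExp_const (p : ℝ) (L : ℕ) (c : ℝ) : bExp p L (fun _ => c) = c := by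
  have h := bExp_pow p L 1
  simp only [one_pow, mul_one, sub_add_cancel, bExp] at h ⊢
  rw [← Finset.sum_mul, h, one_mul]

lemma bExp_add (p : ℝ) (L : ℕ) (f g : ℕ → ℝ) :
    bExp p L (fun k => f k + g k) = bExp p L f + bExp p L g := by
  simp only [bExp, mul_add, Finset.sum_add_distrib]

lemma bExp_sub (p : ℝ) (L : ℕ) (f g : ℕ → ℝ) :
    bExp p L (fun k => f k - g k) = bExp p L f - bExp p L g := by
  simp only [bExp, mul_sub, Finset.sum_sub_distrib]

lemma bExp_mul (p : ℝ) (L : ℕ) (c : ℝ) (f : ℕ → ℝ) :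
    bExp p L (fun k => c * f k) = c * bExp p L f := by
  simp only [bExp, Finset.mul_sum]
  exact Finset.sum_congr rfl fun k _ => by ring

lemma bExp_mono {p : ℝ} (h0 : 0 ≤ p) (h1 : p ≤ 1) (L : ℕ) {f g : ℕ → ℝ}
    (h : ∀ k ≤ L, f k ≤ g k) : bExp p L f ≤ bExp p L g := by
  refine Finset.sum_le_sum fun k hk => ?_
  have h1' : 0 ≤ 1 - p := by linarith
  have := h k (by simpa [Nat.lt_succ_iff] using hk)
  gcongr

lemma bExp_abs_le {p : ℝ} (h0 : 0 ≤ p) (h1 : p ≤ 1) (L : ℕ) {f g : ℕ → ℝ}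
    (h : ∀ k ≤ L, |f k| ≤ g k) : |bExp p L f| ≤ bExp p L g := by
  have h2 := bExp_mono h0 h1 L fun k hk => (abs_le.1 (h k hk)).2
  have h3 := bExp_mono (f := fun k => (-1) * g k) (g := f) h0 h1 L
    fun k hk => by linarith [(abs_le.1 (h k hk)).1]
  rw [bExp_mul] at h3
  exact abs_le.2 ⟨by linarith, h2⟩

/-- Splitting off one trial: `K` with `L + 1` trials is a `K` with `L` trials plus a Bernoulli variable. -/
lemma bExp_succ (p : ℝ) (L : ℕ) (f : ℕ → ℝ) :
    bExp p (L + 1) f = bExp p L (fun k => (1 - p) * f k + p * f (k + 1)) := by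
  have e1 : bExp p L (fun k => (1 - p) * f k) =
      ∑ k ∈ Finset.range (L + 2), (L.choose k : ℝ) * p ^ k * (1 - p) ^ (L + 1 - k) * f k := by
    rw [Finset.sum_range_succ, bExp]
    simp only [Nat.choose_succ_self, Nat.cast_zero, zero_mul, add_zero]
    refine Finset.sum_congr rfl fun k hk => ?_
    have hk : k ≤ L := by simpa [Nat.lt_succ_iff] using hk
    rw [Nat.succ_sub hk, pow_succ]; ring
  rw [bExp_add, e1, Finset.sum_range_succ', bExp, Finset.sum_range_succ', bExp,
    add_right_comm, ← Finset.sum_add_distrib]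
  congr 1
  · refine Finset.sum_congr rfl fun k _ => ?_
    rw [Nat.choose_succ_succ, Nat.add_sub_add_right, pow_succ]
    push_cast; ring
  · simp

/-- Size biasing: `E[K f(K)] = (L + 1) p E[f(K' + 1)]`, where `K'` has one trial fewer. -/
lemma bExp_absorb (p : ℝ) (L : ℕ) (f : ℕ → ℝ) :
    bExp p (L + 1) (fun k => k * f k) = (L + 1) * p * bExp p L (fun k => f (k + 1)) := by
  rw [bExp, Finset.sum_range_succ', bExp, Finset.mul_sum]
  simp only [Nat.cast_zero, zero_mul, mul_zero, add_zero]
  refine Finset.sum_congr rfl fun k _ => ?_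
  have : ((L : ℝ) + 1) * L.choose k = (L + 1).choose (k + 1) * (k + 1) := by
    exact_mod_cast Nat.add_one_mul_choose_eq L k
  rw [Nat.add_sub_add_right, pow_succ]
  push_cast
  linear_combination (-p ^ k * p * (1 - p) ^ (L - k) * f (k + 1)) * this

/-- The discrete zero-bias identity of the binomial law: the covariance of `K` and `f(K)` is the variance
of `K` times the mean increment `f(K' + 1) - f(K')`, where `K'` has one trial fewer. -/
lemma bExp_stein (p : ℝ) (L : ℕ) (f : ℕ → ℝ) :
    bExp p (L + 1) (fun k => ((k : ℝ) - (L + 1) * p) * f k) =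
      (L + 1) * p * (1 - p) * bExp p L (fun k => f (k + 1) - f k) := by
  have : (fun k : ℕ => ((k : ℝ) - (L + 1) * p) * f k) =
      fun k : ℕ => (k : ℝ) * f k - ((L + 1) * p) * f k := by ext k; ring
  rw [this, bExp_sub, bExp_absorb, bExp_mul, bExp_succ, bExp_add, bExp_mul, bExp_mul, bExp_sub]
  ring

lemma bExp_variance (p : ℝ) (L : ℕ) :
    bExp p (L + 1) (fun k => ((k : ℝ) - (L + 1) * p) ^ 2) = (L + 1) * p * (1 - p) := by
  have h := bExp_stein p L (fun k => (k : ℝ) - (L + 1) * p)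
  simp only [Nat.cast_add, Nat.cast_one, add_sub_cancel_left, sub_sub_sub_cancel_right,
    bExp_const, mul_one] at h
  rw [← h]; congr 1; ext k; ring

/-! ### The Gaussian distribution function and the solution of the Stein equation -/

/-- The standard Gaussian density. -/
def phi (x : ℝ) : ℝ := exp (-x ^ 2 / 2) / √(2 * π)

lemma phi_pos (x : ℝ) : 0 < phi x := by unfold phi; positivity

lemma phi_eq : phi = gaussianPDFReal 0 1 := by
  ext x; simp [phi, gaussianPDFReal, div_eq_inv_mul]

lemma phi_neg (x : ℝ) : phi (-x) = phi x := by simp [phi]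

lemma integrable_phi : Integrable phi := by
  rw [phi_eq]; exact integrable_gaussianPDFReal 0 1

lemma integral_phi : ∫ x, phi x = 1 := by
  rw [phi_eq]; exact integral_gaussianPDFReal_eq_one 0 one_ne_zero

lemma phi_hasDerivAt (x : ℝ) : HasDerivAt phi (-x * phi x) x := by
  have h : HasDerivAt (fun y : ℝ => -y ^ 2 / 2) (-x) x := by
    exact ((hasDerivAt_pow 2 x).fun_neg.div_const 2).congr_deriv (by simp; ring)
  refine (h.exp.div_const (√(2 * π))).congr_deriv ?_
  simp only [phi]; ring

lemma phi_continuous : Continuous phi :=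
  continuous_iff_continuousAt.2 fun x => (phi_hasDerivAt x).continuousAt

lemma phi_le (x : ℝ) : phi x ≤ (√(2 * π))⁻¹ := by
  unfold phi
  rw [div_eq_inv_mul]
  refine mul_le_of_le_one_right (by positivity) ?_
  rw [exp_le_one_iff]; nlinarith [sq_nonneg x]

lemma Phi_eq (z : ℝ) : Phi z = ∫ t in Set.Iic z, phi t := rfl

lemma Phi_eq_measure (z : ℝ) : ((gaussianReal 0 1) (Set.Iic z)).toReal = Phi z := by
  rw [gaussianReal_apply_eq_integral 0 one_ne_zero, ← phi_eq, ← Phi_eq, ENNReal.toReal_ofReal]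
  exact setIntegral_nonneg measurableSet_Iic fun x _ => (phi_pos x).le

lemma Phi_nonneg (z : ℝ) : 0 ≤ Phi z := by
  rw [← Phi_eq_measure]; exact ENNReal.toReal_nonneg

lemma Phi_sub (a b : ℝ) : Phi b - Phi a = ∫ t in a..b, phi t :=
  intervalIntegral.integral_Iic_sub_Iic integrable_phi.integrableOn integrable_phi.integrableOn

lemma Phi_hasDerivAt (x : ℝ) : HasDerivAt Phi (phi x) x := by
  have h : Phi = fun y => (∫ t in (0:ℝ)..y, phi t) + Phi 0 := by
    ext y; rw [← Phi_sub]; ring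
  rw [h]
  exact (intervalIntegral.integral_hasDerivAt_right (phi_continuous.intervalIntegrable _ _)
    phi_continuous.stronglyMeasurable.stronglyMeasurableAtFilter
    phi_continuous.continuousAt).add_const _

lemma Phi_continuous : Continuous Phi :=
  continuous_iff_continuousAt.2 fun x => (Phi_hasDerivAt x).continuousAt

lemma Phi_mono : Monotone Phi :=
  monotone_of_deriv_nonneg (fun x => (Phi_hasDerivAt x).differentiableAt) fun x => by
    rw [(Phi_hasDerivAt x).deriv]; exact (phi_pos x).le

lemma Phi_lipschitz (a b : ℝ) : |Phi b - Phi a| ≤ (√(2 * π))⁻¹ * |b - a| := by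
  rw [Phi_sub, ← Real.norm_eq_abs]
  refine intervalIntegral.norm_integral_le_of_norm_le_const fun x _ => ?_
  rw [Real.norm_eq_abs, abs_of_pos (phi_pos x)]; exact phi_le x

lemma one_sub_Phi (z : ℝ) : 1 - Phi z = Phi (-z) := by
  have h1 : ∫ t in Set.Iic (-z), phi (-t) = ∫ t in Set.Ioi z, phi t := by
    rw [integral_comp_neg_Iic, neg_neg]
  simp only [phi_neg] at h1
  rw [Phi_eq (-z), h1, ← integral_phi, Phi_eq, ← intervalIntegral.integral_Iic_add_Ioi (b := z)
    integrable_phi.integrableOn integrable_phi.integrableOn]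
  ring

lemma Phi_le_one (z : ℝ) : Phi z ≤ 1 := by
  linarith [one_sub_Phi z, Phi_nonneg (-z)]

/-- Mills' inequality, from `∫_{-∞}^w -t φ(t) dt = φ(w)` and `-t ≥ -w` for `t ≤ w`. -/
lemma mills_aux (w : ℝ) : -w * Phi w ≤ phi w := by
  have hint : Integrable fun x : ℝ => -x * phi x := by
    have := (integrable_mul_exp_neg_mul_sq (b := 1 / 2) (by norm_num)).const_mul (-(√(2 * π))⁻¹)
    convert this using 2 with x
    unfold phi
    rw [show -x ^ 2 / 2 = -(1 / 2) * x ^ 2 by ring]; field_simp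
  have hlim : Tendsto phi atBot (nhds 0) := by
    have h1 : Tendsto (fun x : ℝ => -x ^ 2 / 2) atBot atBot := by
      have h2 : Tendsto (fun x : ℝ => x ^ 2) atBot atTop := by
        have := (tendsto_pow_atTop (α := ℝ) two_ne_zero).comp tendsto_neg_atBot_atTop
        simpa [Function.comp_def] using this
      have h3 := tendsto_neg_atTop_atBot.comp h2
      exact h3.atBot_div_const (by norm_num)
    have := (tendsto_exp_atBot.comp h1).div_const (√(2 * π))
    rw [zero_div] at this; exact this
  have h := integral_Iic_of_hasDerivAt_of_tendsto' (a := w) (fun x _ => phi_hasDerivAt x)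
    hint.integrableOn hlim
  rw [sub_zero] at h
  rw [← h, Phi_eq, ← integral_const_mul]
  refine setIntegral_mono_on (integrable_phi.const_mul _).integrableOn hint.integrableOn
    measurableSet_Iic fun x hx => ?_
  have := phi_pos x
  have hx : x ≤ w := hx
  gcongr

lemma mills_neg {w : ℝ} (hw : w ≤ 0) : |w| * Phi w ≤ phi w := by
  rw [abs_of_nonpos hw]; exact mills_aux w

lemma mills_pos {w : ℝ} (hw : 0 ≤ w) : |w| * (1 - Phi w) ≤ phi w := by
  rw [one_sub_Phi, ← phi_neg, ← abs_neg]
  exact mills_neg (by linarith)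

/-- The bounded solution `f_z` of the Stein equation `f'(w) - w f(w) = 1_{w ≤ z} - Φ(z)`. The use of `min`
and `max` merges the two formulas valid for `w ≤ z` and `w ≥ z`. -/
def steinF (z w : ℝ) : ℝ := Phi (min w z) * (1 - Phi (max w z)) / phi w

lemma steinF_nonneg (z w : ℝ) : 0 ≤ steinF z w :=
  div_nonneg (mul_nonneg (Phi_nonneg _) (by linarith [Phi_le_one (max w z)])) (phi_pos w).le

lemma steinF_continuous (z : ℝ) : Continuous (steinF z) := by
  unfold steinF
  refine Continuous.div ?_ phi_continuous fun w => (phi_pos w).ne'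
  have := Phi_continuous
  fun_prop

/-- The Stein equation, away from the corner `w = z`. -/
lemma steinF_hasDerivAt {z w : ℝ} (h : w ≠ z) :
    HasDerivAt (steinF z) (w * steinF z w + (Set.Iic z).indicator 1 w - Phi z) w := by
  have hp := (phi_pos w).ne'
  rcases lt_or_gt_of_ne h with h | h
  · have e : steinF z =ᶠ[nhds w] fun y => Phi y * (1 - Phi z) / phi y := by
      filter_upwards [gt_mem_nhds h] with y hy
      rw [steinF, min_eq_left hy.le, max_eq_right hy.le]
    refine HasDerivAt.congr_of_eventuallyEq ?_ e
    refine (((Phi_hasDerivAt w).mul_const (1 - Phi z)).fun_div (phi_hasDerivAt w) hp).congr_deriv ?_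
    rw [e.eq_of_nhds, Set.indicator_of_mem (Set.mem_Iic.2 h.le)]
    simp only [Pi.one_apply]
    field_simp; ring
  · have e : steinF z =ᶠ[nhds w] fun y => Phi z * (1 - Phi y) / phi y := by
      filter_upwards [lt_mem_nhds h] with y hy
      rw [steinF, min_eq_right hy.le, max_eq_left hy.le]
    refine HasDerivAt.congr_of_eventuallyEq ?_ e
    refine ((((Phi_hasDerivAt w).const_sub 1).const_mul (Phi z)).fun_div
      (phi_hasDerivAt w) hp).congr_deriv ?_
    rw [e.eq_of_nhds, Set.indicator_of_notMem (by simpa using h)]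
    field_simp; ring

lemma abs_mul_steinF_le (z w : ℝ) : |w * steinF z w| ≤ 1 := by
  rw [abs_mul, abs_of_nonneg (steinF_nonneg z w), steinF, ← mul_div_assoc,
    div_le_one (phi_pos w)]
  have h1 : 0 ≤ 1 - Phi (max w z) := by linarith [Phi_le_one (max w z)]
  have h2 := Phi_nonneg (min w z)
  rcases le_total w 0 with hw | hw
  · calc |w| * (Phi (min w z) * (1 - Phi (max w z))) ≤ |w| * (Phi w * 1) := by
          gcongr
          · exact Phi_nonneg w
          · exact Phi_mono (min_le_left _ _)
          · linarith [Phi_nonneg (max w z)]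
      _ ≤ phi w := by rw [mul_one]; exact mills_neg hw
  · calc |w| * (Phi (min w z) * (1 - Phi (max w z))) ≤ |w| * (1 * (1 - Phi w)) := by
          gcongr
          · exact Phi_le_one _
          · exact Phi_mono (le_max_left _ _)
      _ ≤ phi w := by rw [one_mul]; exact mills_pos hw

/-- A crude bound: for `|w| ≥ 1` it follows from `|w f_z(w)| ≤ 1`, and for `|w| ≤ 1` from `φ(w) ≥ 1/6`. -/
lemma steinF_le (z w : ℝ) : steinF z w ≤ 6 := by
  have h0 := steinF_nonneg z w
  rcases le_total 1 |w| with hw | hw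
  · have h := abs_mul_steinF_le z w
    rw [abs_mul, abs_of_nonneg h0] at h
    nlinarith
  · have h1 : 0 ≤ 1 - Phi (max w z) := by linarith [Phi_le_one (max w z)]
    have h2 : Phi (min w z) * (1 - Phi (max w z)) ≤ 1 := by
      nlinarith [Phi_le_one (min w z), Phi_nonneg (min w z), Phi_nonneg (max w z)]
    rw [steinF, div_le_iff₀ (phi_pos w)]
    suffices 1 ≤ 6 * phi w by linarith
    have hw2 : w ^ 2 ≤ 1 := by rw [← sq_abs]; nlinarith [abs_nonneg w]
    have h3 : (1:ℝ) / 2 ≤ exp (-w ^ 2 / 2) := by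
      have := add_one_le_exp (-w ^ 2 / 2); linarith
    have h4 : √(2 * π) ≤ 3 := by
      rw [Real.sqrt_le_left (by norm_num)]
      · have := pi_lt_d2; norm_num; linarith
    unfold phi
    rw [← mul_div_assoc, le_div_iff₀ (by positivity)]
    linarith

lemma indicator_antitone (z : ℝ) : Antitone ((Set.Iic z).indicator (1 : ℝ → ℝ)) := by
  intro x y hxy
  by_cases hy : y ∈ Set.Iic z
  · rw [Set.indicator_of_mem hy, Set.indicator_of_mem (Set.mem_Iic.2 (hxy.trans hy))]; rfl
  · rw [Set.indicator_of_notMem hy]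
    exact Set.indicator_nonneg (fun _ _ => zero_le_one) x

lemma indicator_intervalIntegrable (z a b : ℝ) :
    IntervalIntegrable ((Set.Iic z).indicator (1 : ℝ → ℝ)) volume a b :=
  (indicator_antitone z).intervalIntegrable

/-- The Stein equation in integrated form; the corner at `z` is a null set. -/
lemma steinF_ftc (z a b : ℝ) :
    ∫ t in a..b, (t * steinF z t + (Set.Iic z).indicator 1 t - Phi z) =
      steinF z b - steinF z a := by
  refine integral_eq_of_hasDerivAt_off_countable (s := {z}) _ _ (Set.countable_singleton z)
    (steinF_continuous z).continuousOn (fun x hx => steinF_hasDerivAt hx.2) ?_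
  refine IntervalIntegrable.sub (IntervalIntegrable.add ?_ (indicator_intervalIntegrable z a b)) ?_
  · exact (continuous_id.mul (steinF_continuous z)).intervalIntegrable _ _
  · exact intervalIntegrable_const

lemma steinF_lipschitz (z a b : ℝ) : |steinF z b - steinF z a| ≤ 2 * |b - a| := by
  rw [← steinF_ftc, ← Real.norm_eq_abs]
  refine intervalIntegral.norm_integral_le_of_norm_le_const fun x _ => ?_
  have h1 := abs_le.1 (abs_mul_steinF_le z x)
  have h2 := Phi_nonneg z
  have h3 := Phi_le_one z
  rw [Real.norm_eq_abs, abs_le]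
  by_cases hx : x ∈ Set.Iic z
  · rw [Set.indicator_of_mem hx]; simp only [Pi.one_apply]; constructor <;> linarith
  · rw [Set.indicator_of_notMem hx]; constructor <;> linarith

/-- The function `w f_z(w)` is locally Lipschitz, with constant growing linearly in `|a|`. -/
lemma mul_steinF_lipschitz (z a b : ℝ) :
    |a * steinF z a - b * steinF z b| ≤ (6 + 2 * |a|) * |b - a| := by
  have e : a * steinF z a - b * steinF z b =
    -(a * (steinF z b - steinF z a)) + -((b - a) * steinF z b) := by ring
  rw [e]
  refine (abs_add_le _ _).trans ?_
  rw [abs_neg, abs_neg, abs_mul, abs_mul, abs_of_nonneg (steinF_nonneg z b)]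
  have h1 := mul_le_mul_of_nonneg_left (steinF_lipschitz z a b) (abs_nonneg a)
  have h2 := mul_le_mul_of_nonneg_left (steinF_le z b) (abs_nonneg (b - a))
  linarith

/-! ### Tail bounds for the binomial law -/

/-- Hoeffding's lemma for a Bernoulli variable. -/
lemma bernoulli_mgf_le {p : ℝ} (h0 : 0 ≤ p) (h1 : p ≤ 1) (t : ℝ) :
    1 - p + p * exp t ≤ exp (t * p + t ^ 2 / 8) := by
  -- A Bernoulli law on `{0, 1}`, to which the Hoeffding lemma for bounded variables applies.
  let ν : Measure ℝ := ENNReal.ofReal (1 - p) • Measure.dirac 0 + ENNReal.ofReal p • Measure.dirac 1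
  have hν : IsProbabilityMeasure ν := ⟨by
    simp [ν, ← ENNReal.ofReal_add (sub_nonneg.2 h1) h0]⟩
  have hint (g : ℝ → ℝ) : ∫ x, g x ∂ν = (1 - p) * g 0 + p * g 1 := by
    have i1 : Integrable g (ENNReal.ofReal (1 - p) • Measure.dirac (0:ℝ)) :=
      (integrable_dirac (by simp)).smul_measure ENNReal.ofReal_ne_top
    have i2 : Integrable g (ENNReal.ofReal p • Measure.dirac (1:ℝ)) :=
      (integrable_dirac (by simp)).smul_measure ENNReal.ofReal_ne_top
    rw [integral_add_measure i1 i2, integral_smul_measure, integral_smul_measure,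
      integral_dirac, integral_dirac, ENNReal.toReal_ofReal h0,
      ENNReal.toReal_ofReal (sub_nonneg.2 h1)]
    simp
  have h := (hasSubgaussianMGF_of_mem_Icc (μ := ν) (X := id) (a := 0) (b := 1)
    aemeasurable_id (by
      rw [ae_add_measure_iff]
      exact ⟨Measure.ae_smul_measure (by simp [ae_dirac_eq]) _,
        Measure.ae_smul_measure (by simp [ae_dirac_eq]) _⟩)).mgf_le t
  simp only [mgf, hint, id] at h
  norm_num at h
  have e : 1 - p + p * exp t = exp (t * p) *
    ((1 - p) * exp (-(t * p)) + p * exp (t * (1 - p))) := by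
    rw [mul_add, mul_left_comm, mul_left_comm _ p, ← exp_add, ← exp_add]
    ring_nf; simp; ring
  rw [e, exp_add]
  refine mul_le_mul_of_nonneg_left (h.trans (le_of_eq ?_)) (exp_pos _).le
  ring_nf

lemma bExp_exp (p : ℝ) (L : ℕ) (t c : ℝ) :
    bExp p L (fun k => exp (t * k - c)) = (1 - p + p * exp t) ^ L * exp (-c) := by
  rw [← bExp_pow, mul_comm, ← bExp_mul]
  congr 1; ext k
  rw [← exp_nat_mul, ← exp_add]; ring_nf

/-- Hoeffding's inequality for the binomial law. -/
lemma binom_hoeffding {p : ℝ} (h0 : 0 ≤ p) (h1 : p ≤ 1) (L : ℕ) {η : ℝ} (hη : 0 ≤ η) :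
    bExp p L (fun k => if L * η < |(k : ℝ) - L * p| then 1 else 0) ≤
      2 * exp (-2 * L * η ^ 2) := by
  have key (t : ℝ) (ht : |t| = 4 * η) :
      bExp p L (fun k => exp (t * k - (t * L * p + 4 * L * η ^ 2))) ≤ exp (-2 * L * η ^ 2) := by
    rw [bExp_exp]
    have : 0 ≤ 1 - p + p * exp t := by have := exp_pos t; nlinarith
    calc _ ≤ exp (t * p + t ^ 2 / 8) ^ L * exp (-(t * L * p + 4 * L * η ^ 2)) := by
          gcongr; exact bernoulli_mgf_le h0 h1 t
      _ = _ := by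
          rw [← exp_nat_mul, ← exp_add, ← sq_abs t, ht]; ring_nf
  -- The parameter `t = ± 4 η` minimizes `t ^ 2 / 8 - |t| η`.
  have h2 := key (4 * η) (abs_of_nonneg (by positivity))
  have h3 := key (-(4 * η)) (by rw [abs_neg]; exact abs_of_nonneg (by positivity))
  rw [two_mul]
  refine le_trans ?_ (add_le_add h2 h3)
  rw [← bExp_add]
  refine bExp_mono h0 h1 L fun k _ => ?_
  split_ifs with h
  · rcases lt_abs.1 h with h | h
    · have : 1 ≤ exp (4 * η * k - (4 * η * L * p + 4 * L * η ^ 2)) := by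
        rw [one_le_exp_iff]; nlinarith
      linarith [exp_pos (-(4 * η) * k - (-(4 * η) * L * p + 4 * L * η ^ 2))]
    · have : 1 ≤ exp (-(4 * η) * k - (-(4 * η) * L * p + 4 * L * η ^ 2)) := by
        rw [one_le_exp_iff]; nlinarith
      linarith [exp_pos (4 * η * k - (4 * η * L * p + 4 * L * η ^ 2))]
  · positivity

lemma binom_chernoff_aux {r : ℝ} (h0 : 0 ≤ r) (h1 : r ≤ 1) (m : ℕ) (t c : ℝ) :
    bExp r m (fun d => exp (t * d - c)) ≤ exp (m * r * (exp t - 1) - c) := by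
  rw [bExp_exp, sub_eq_add_neg _ c, exp_add]
  have : 0 ≤ 1 - r + r * exp t := by have := exp_pos t; nlinarith
  gcongr
  calc (1 - r + r * exp t) ^ m ≤ exp (r * (exp t - 1)) ^ m := by
        gcongr; linarith [add_one_le_exp (r * (exp t - 1))]
    _ = _ := by rw [← exp_nat_mul]; ring_nf

/-- The inequality `x ≤ sinh x` at `x = log (1 + δ)`. -/
lemma log_one_add_le {δ : ℝ} (h : 0 < δ) : 2 * log (1 + δ) ≤ 1 + δ - (1 + δ)⁻¹ := by
  have h1 : 0 ≤ log (1 + δ) := log_nonneg (by linarith)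
  have h2 := self_le_sinh_iff.2 h1
  rw [sinh_eq, exp_neg, exp_log (by linarith)] at h2
  linarith

/-- Two-sided Chernoff bound with the rate `Ψ(δ)`. The lower tail also has this rate, as is seen by
taking `t = -log (1 + δ)` in the exponential Markov inequality and using `log_one_add_le`. -/
lemma binom_chernoff {r : ℝ} (h0 : 0 ≤ r) (h1 : r ≤ 1) (m : ℕ) {δ : ℝ} (hδ : 0 < δ) :
    bExp r m (fun d => if (1 + δ) * (m * r) < d ∨ (d : ℝ) < (1 - δ) * (m * r) then 1 else 0) ≤
      2 * exp (-Psi δ * (m * r)) := by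
  set θ := log (1 + δ) with hθ
  have hθ0 : 0 ≤ θ := log_nonneg (by linarith)
  have hmr : 0 ≤ m * r := by positivity
  have e1 : exp θ = 1 + δ := exp_log (by linarith)
  have h2 := binom_chernoff_aux h0 h1 m θ (θ * ((1 + δ) * (m * r)))
  have h3 := binom_chernoff_aux h0 h1 m (-θ) (-θ * ((1 - δ) * (m * r)))
  have h2' : exp (m * r * (exp θ - 1) - θ * ((1 + δ) * (m * r))) ≤ exp (-Psi δ * (m * r)) := by
    rw [e1, Psi, add_comm δ 1, ← hθ]
    apply le_of_eq; ring_nf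
  have h3' : exp (m * r * (exp (-θ) - 1) - -θ * ((1 - δ) * (m * r))) ≤
      exp (-Psi δ * (m * r)) := by
    rw [exp_neg, e1, Psi, add_comm δ 1, ← hθ, exp_le_exp]
    have := mul_le_mul_of_nonneg_left (log_one_add_le hδ) hmr
    rw [← hθ] at this
    nlinarith
  rw [two_mul]
  refine le_trans ?_ (add_le_add (h2.trans h2') (h3.trans h3'))
  rw [← bExp_add]
  refine bExp_mono h0 h1 m fun d _ => ?_
  have p1 := exp_pos (θ * d - θ * ((1 + δ) * (m * r)))
  have p2 := exp_pos (-θ * d - -θ * ((1 - δ) * (m * r)))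
  split_ifs with h
  · rcases h with h | h
    · have : 1 ≤ exp (θ * d - θ * ((1 + δ) * (m * r))) := by
        rw [one_le_exp_iff]; nlinarith
      linarith
    · have : 1 ≤ exp (-θ * d - -θ * ((1 - δ) * (m * r))) := by
        rw [one_le_exp_iff]; nlinarith
      linarith
  · positivity

/-! ### Berry–Esseen for the binomial law -/

/-- The mean of the indicator of `(-∞, z]` over `[w, w + h]` is at most the indicator of `w < z`. -/
lemma indicator_average_le {z w h : ℝ} (hh : 0 < h) :
    h⁻¹ * ∫ t in w..w + h, (Set.Iic z).indicator (1 : ℝ → ℝ) t ≤ if w < z then 1 else 0 := by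
  rw [inv_mul_le_iff₀ hh]
  split_ifs with hw
  · calc _ ≤ ∫ t in w..w + h, (1:ℝ) := by
          refine intervalIntegral.integral_mono_on (by linarith)
            (indicator_intervalIntegrable z _ _) intervalIntegrable_const fun t _ => ?_
          exact Set.indicator_le_self' (fun _ _ => zero_le_one) t
      _ = _ := by simp
  · rw [intervalIntegral.integral_of_le (by linarith), setIntegral_congr_fun (g := fun _ => 0)
      measurableSet_Ioc]
    · simp
    · intro t ht
      exact Set.indicator_of_notMem (s := Set.Iic z) (fun h' => hw (ht.1.trans_le h')) 1

lemma le_indicator_average {z w h : ℝ} (hh : 0 < h) :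
    (if w + h ≤ z then 1 else 0) ≤
      h⁻¹ * ∫ t in w..w + h, (Set.Iic z).indicator (1 : ℝ → ℝ) t := by
  rw [le_inv_mul_iff₀ hh]
  split_ifs with hw
  · calc h * 1 = ∫ t in w..w + h, (1:ℝ) := by simp
      _ ≤ _ := by
          refine intervalIntegral.integral_mono_on (by linarith)
            intervalIntegrable_const (indicator_intervalIntegrable z _ _) fun t ht => ?_
          rw [Set.indicator_of_mem (Set.mem_Iic.2 (ht.2.trans hw))]; rfl
  · rw [mul_zero]
    exact intervalIntegral.integral_nonneg (by linarith)
      fun t _ => Set.indicator_nonneg (fun _ _ => zero_le_one) t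

/-- Replacing the mean of `t f_z(t)` over an interval of length `h` by its value at a point `a` of this
interval costs at most `(6 + 2 |a|) h`. -/
lemma stein_average_error (z w h a : ℝ) (hh : 0 < h) (ha : a ∈ Set.Icc w (w + h)) :
    |a * steinF z a - h⁻¹ * ∫ t in w..w + h, t * steinF z t| ≤ (6 + 2 * |a|) * h := by
  have hc : Continuous fun t => t * steinF z t := continuous_id.mul (steinF_continuous z)
  have e : a * steinF z a - h⁻¹ * ∫ t in w..w + h, t * steinF z t =
      h⁻¹ * ∫ t in w..w + h, (a * steinF z a - t * steinF z t) := by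
    rw [intervalIntegral.integral_sub intervalIntegrable_const (hc.intervalIntegrable _ _)]
    simp; field_simp
  rw [e, abs_mul, abs_of_pos (inv_pos.2 hh), inv_mul_le_iff₀ hh, ← Real.norm_eq_abs]
  refine (intervalIntegral.norm_integral_le_of_norm_le_const (C := (6 + 2 * |a|) * h) ?_).trans ?_
  · intro t ht
    rw [Set.uIoc_of_le (by linarith)] at ht
    refine (mul_steinF_lipschitz z a t).trans ?_
    gcongr
    exact abs_le.2 ⟨by linarith [ha.2, ht.1], by linarith [ha.1, ht.2]⟩
  · rw [add_sub_cancel_left, abs_of_pos hh, mul_comm]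

/-- With `W = (K - E K) / s`, the zero-biased variable is `W* = W' + h U`. Here
`W' = (K' - E K) / s` with `K'` having one trial fewer, `h = 1 / s`, and `U` is uniform on `[0, 1]`.
The lemma says `|P(W* ≤ z) - Φ(z)| ≤ 8 / s`: integrating the Stein equation over the step of length `h` gives
`P(W* ≤ z) - Φ(z) = E[f_z'(W*)] - E[W* f_z(W*)] = E[W f_z(W)] - E[W* f_z(W*)]`, and `W` and `W*` can
be coupled to lie within `h` of each other. -/
lemma zero_bias_bound {p : ℝ} (h0 : 0 < p) (h1 : p < 1) (N : ℕ) (z s : ℝ) (hs : 0 < s)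
    (hs2 : s ^ 2 = (N + 1) * p * (1 - p)) (w : ℕ → ℝ)
    (hw : ∀ k : ℕ, w k = (k - (N + 1) * p) / s) :
    |bExp p N (fun j => (s⁻¹)⁻¹ *
        ∫ t in w j..w j + s⁻¹, (Set.Iic z).indicator (1 : ℝ → ℝ) t) - Phi z| ≤ 8 * s⁻¹ := by
  set h := s⁻¹ with hh
  have hpos : 0 < h := inv_pos.2 hs
  have hstep (j : ℕ) : w (j + 1) = w j + h := by
    rw [hw, hw, hh]; push_cast; field_simp; ring
  set g : ℝ → ℝ := fun t => t * steinF z t with hg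
  have hgc : Continuous g := continuous_id.mul (steinF_continuous z)
  have h_pt (j : ℕ) : h⁻¹ * (∫ t in w j..w j + h, (Set.Iic z).indicator (1 : ℝ → ℝ) t) =
      Phi z + s * (steinF z (w (j + 1)) - steinF z (w j)) - h⁻¹ * ∫ t in w j..w j + h, g t := by
    rw [hstep, ← steinF_ftc, intervalIntegral.integral_sub _ intervalIntegrable_const,
      intervalIntegral.integral_add (hgc.intervalIntegrable _ _)
        (indicator_intervalIntegrable _ _ _)]
    · simp [hh]; field_simp; ring
    · exact (hgc.intervalIntegrable _ _).add (indicator_intervalIntegrable _ _ _)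
  have h_id : bExp p N (fun j => s * (steinF z (w (j + 1)) - steinF z (w j))) =
      bExp p N (fun j => (1 - p) * g (w j) + p * g (w (j + 1))) := by
    have := bExp_stein p N (fun k => steinF z (w k))
    rw [← hs2] at this
    rw [← bExp_succ p N (fun k => g (w k)), bExp_mul, ← mul_right_inj' hs.ne', ← mul_assoc, ← sq,
      ← this, ← bExp_mul]
    congr 1; ext k
    simp only [hg, hw]; field_simp
  have e : bExp p N (fun j => h⁻¹ *
        ∫ t in w j..w j + h, (Set.Iic z).indicator (1 : ℝ → ℝ) t) - Phi z =
      bExp p N (fun j => ((1 - p) * g (w j) + p * g (w (j + 1))) -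
        h⁻¹ * ∫ t in w j..w j + h, g t) := by
    simp_rw [h_pt]
    rw [bExp_sub, bExp_add, bExp_const, bExp_sub, h_id]; ring
  rw [e]
  refine (bExp_abs_le (g := fun j => (1 - p) * ((6 + 2 * |w j|) * h) +
    p * ((6 + 2 * |w (j + 1)|) * h)) h0.le h1.le N fun j _ => ?_).trans ?_
  · have e2 : ((1 - p) * g (w j) + p * g (w (j + 1))) - h⁻¹ * ∫ t in w j..w j + h, g t =
      (1 - p) * (g (w j) - h⁻¹ * ∫ t in w j..w j + h, g t) +
        p * (g (w (j + 1)) - h⁻¹ * ∫ t in w j..w j + h, g t) := by ring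
    rw [e2]
    refine (abs_add_le _ _).trans ?_
    rw [abs_mul, abs_mul, abs_of_pos h0, abs_of_pos (sub_pos.2 h1)]
    have q : 0 ≤ 1 - p := (sub_pos.2 h1).le
    gcongr
    · exact stein_average_error z _ h _ hpos ⟨le_rfl, by linarith⟩
    · exact stein_average_error z _ h _ hpos (by rw [hstep]; exact ⟨by linarith, le_rfl⟩)
  -- The error is an expectation over `N + 1` trials; use `2 |W| ≤ 1 + W ^ 2` and `E[W ^ 2] = 1`.
  · rw [← bExp_succ p N (fun k => (6 + 2 * |w k|) * h)]
    have hv : bExp p (N + 1) (fun k => w k ^ 2) = 1 := by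
      have := bExp_variance p N
      rw [← hs2] at this
      have e3 : (fun k => w k ^ 2) = fun k : ℕ => (s ^ 2)⁻¹ * ((k : ℝ) - (N + 1) * p) ^ 2 := by
        ext k; rw [hw]; field_simp
      rw [e3, bExp_mul, this]; field_simp
    calc _ ≤ bExp p (N + 1) (fun k => h * (7 + w k ^ 2)) := by
          refine bExp_mono h0.le h1.le _ fun k _ => ?_
          rw [mul_comm]
          refine mul_le_mul_of_nonneg_left ?_ hpos.le
          rw [← sq_abs]; nlinarith [sq_nonneg (|w k| - 1)]
      _ = 8 * h := by rw [bExp_mul, bExp_add, bExp_const, hv]; ring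

lemma inv_sqrt_two_pi_le : (√(2 * π))⁻¹ ≤ 1 / 2 := by
  rw [one_div]
  refine inv_anti₀ (by norm_num) ?_
  rw [Real.le_sqrt (by norm_num) (by positivity)]
  have := pi_gt_three; linarith

/-- Berry–Esseen for the binomial law, with the constant 9. As `W` and `W*` differ by at most `1 / s`, one
passes from `W*` to `W` by shifting `z` by `1 / s`. The lower bound is stated for `P(W < z)`, so that
it serves both the closed and the open half-line. -/
lemma binom_berry_esseen {p : ℝ} (h0 : 0 < p) (h1 : p < 1) {L : ℕ} (hL : 0 < L) (z s : ℝ)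
    (hs : 0 < s) (hs2 : s ^ 2 = L * p * (1 - p)) :
    bExp p L (fun k => if ((k : ℝ) - L * p) / s ≤ z then 1 else 0) ≤ Phi z + 9 / s ∧
    Phi z - 9 / s ≤ bExp p L (fun k => if ((k : ℝ) - L * p) / s < z then 1 else 0) := by
  obtain ⟨N, rfl⟩ : ∃ N, L = N + 1 := ⟨L - 1, by omega⟩
  push_cast at hs2 ⊢
  set w : ℕ → ℝ := fun k => ((k : ℝ) - (N + 1) * p) / s with hw
  have hpos : 0 < s⁻¹ := inv_pos.2 hs
  have hstep (j : ℕ) : w (j + 1) = w j + s⁻¹ := by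
    simp only [hw]; push_cast; field_simp; ring
  have q : 0 ≤ 1 - p := (sub_pos.2 h1).le
  have hphi := inv_sqrt_two_pi_le
  rw [bExp_succ, bExp_succ, div_eq_mul_inv]
  change bExp p N (fun j => (1 - p) * (if w j ≤ z then 1 else 0) +
      p * (if w (j + 1) ≤ z then 1 else 0)) ≤ _ ∧
    _ ≤ bExp p N (fun j => (1 - p) * (if w j < z then 1 else 0) +
      p * (if w (j + 1) < z then 1 else 0))
  constructor
  · have hz := (abs_le.1 (zero_bias_bound h0 h1 N (z + s⁻¹) s hs hs2 w fun _ => rfl)).2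
    have hl := (abs_le.1 (Phi_lipschitz z (z + s⁻¹))).2
    rw [add_sub_cancel_left, abs_of_pos hpos] at hl
    have : bExp p N (fun j => (1 - p) * (if w j ≤ z then 1 else 0) +
        p * (if w (j + 1) ≤ z then 1 else 0)) ≤ bExp p N (fun j => (s⁻¹)⁻¹ *
        ∫ t in w j..w j + s⁻¹, (Set.Iic (z + s⁻¹)).indicator (1 : ℝ → ℝ) t) := by
      refine bExp_mono h0.le h1.le N fun j _ => le_trans ?_ (le_indicator_average hpos)
      rw [hstep]
      split_ifs <;> linarith
    nlinarith
  · have hz := (abs_le.1 (zero_bias_bound h0 h1 N (z - s⁻¹) s hs hs2 w fun _ => rfl)).1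
    have hl := (abs_le.1 (Phi_lipschitz (z - s⁻¹) z)).2
    rw [sub_sub_cancel, abs_of_pos hpos] at hl
    have : bExp p N (fun j => (s⁻¹)⁻¹ *
        ∫ t in w j..w j + s⁻¹, (Set.Iic (z - s⁻¹)).indicator (1 : ℝ → ℝ) t) ≤
        bExp p N (fun j => (1 - p) * (if w j < z then 1 else 0) +
        p * (if w (j + 1) < z then 1 else 0)) := by
      refine bExp_mono h0.le h1.le N fun j _ => (indicator_average_le hpos).trans ?_
      rw [hstep]
      split_ifs <;> linarith
    nlinarith

/-! ### Conditioning the degree on the number of ones -/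

/-- The law of `κ Z` for `Z` standard Gaussian and `κ` of either sign. -/
lemma gaussian_halfline {κ : ℝ} (hκ : κ ≠ 0) (t : ℝ) :
    (gaussianReal 0 1 {z | κ * z ≤ t}).toReal = Phi (t / |κ|) := by
  rcases lt_or_gt_of_ne hκ with h | h
  · have e : {z | κ * z ≤ t} = (Set.Iio (t / κ))ᶜ := by
      ext z
      simp only [Set.mem_ofPred_eq, Set.mem_compl_iff, Set.mem_Iio, not_lt]
      rw [div_le_iff_of_neg h, mul_comm]
    have : NullSingletonClass (gaussianReal 0 1) := nullSingletonClass_gaussianReal one_ne_zero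
    rw [e, ← measureReal_def, probReal_compl_eq_one_sub measurableSet_Iio, measureReal_def,
      measure_congr Iio_ae_eq_Iic, Phi_eq_measure, one_sub_Phi, abs_of_neg h, div_neg]
  · have e : {z | κ * z ≤ t} = Set.Iic (t / κ) := by
      ext z
      simp only [Set.mem_ofPred_eq, Set.mem_Iic]
      rw [le_div_iff₀ h, mul_comm]
    rw [e, Phi_eq_measure, abs_of_pos h]

lemma binom_berry_esseen_scaled {p : ℝ} (h0 : 0 < p) (h1 : p < 1) {L : ℕ} (hL : 0 < L) (s : ℝ)
    (hs : 0 < s) (hs2 : s ^ 2 = L * p * (1 - p)) {κ : ℝ} (hκ : κ ≠ 0) (t : ℝ) :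
    |bExp p L (fun k => if κ * (((k : ℝ) - L * p) / s) ≤ t then 1 else 0) - Phi (t / |κ|)| ≤
      9 / s := by
  obtain ⟨hu, hl⟩ := binom_berry_esseen h0 h1 hL (t / κ) s hs hs2
  have hm : bExp p L (fun k => if ((k : ℝ) - L * p) / s < t / κ then 1 else 0) ≤
      bExp p L (fun k => if ((k : ℝ) - L * p) / s ≤ t / κ then 1 else 0) := by
    refine bExp_mono h0.le h1.le L fun k _ => ?_
    split_ifs <;> linarith
  rcases lt_or_gt_of_ne hκ with h | h
  · have e : (fun k : ℕ => if κ * (((k : ℝ) - L * p) / s) ≤ t then (1 : ℝ) else 0) =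
        fun k : ℕ => 1 - if ((k : ℝ) - L * p) / s < t / κ then (1 : ℝ) else 0 := by
      ext k
      have : κ * (((k : ℝ) - L * p) / s) ≤ t ↔ ¬ ((k : ℝ) - L * p) / s < t / κ := by
        rw [not_lt, div_le_iff_of_neg h, mul_comm]
      simp only [this]
      split_ifs <;> simp_all
    rw [e, bExp_sub, bExp_const, abs_of_neg h, div_neg, ← one_sub_Phi]
    exact abs_le.2 ⟨by linarith, by linarith⟩
  · have e : (fun k : ℕ => if κ * (((k : ℝ) - L * p) / s) ≤ t then (1 : ℝ) else 0) =
        fun k : ℕ => if ((k : ℝ) - L * p) / s ≤ t / κ then (1 : ℝ) else 0 := by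
      ext k
      simp only [le_div_iff₀ h, mul_comm κ]
    rw [e, abs_of_pos h]
    exact abs_le.2 ⟨by linarith, by linarith⟩

open Classical in
/-- The law of `D`, obtained by conditioning on `S`. The defining property of the pair only gives the
masses on `[0, m] × [0, L]`; since these add up to 1, a lower bound for every event, applied to an event
and to its complement, yields equality. -/
lemma compound_law {Ω : Type*} [MeasurableSpace Ω] (P : Measure Ω) [IsProbabilityMeasure P]
    {p Γ1 Γ0 : ℝ} (hp0 : 0 ≤ p) (hp1 : p ≤ 1) (hΓ1 : 0 ≤ Γ1) (hΓ1' : Γ1 ≤ 1)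
    (hΓ0 : 0 ≤ Γ0) (hΓ0' : Γ0 ≤ 1) {m L : ℕ} {D S : Ω → ℕ}
    (h : IsCompoundBinomialPair P p (1 - p) Γ1 Γ0 (m + 1) L D S) (A : ℕ → Prop) :
    (P {ω | A (D ω)}).toReal = bExp p L (fun ℓ =>
      bExp (Γ1 ^ ℓ * Γ0 ^ (L - ℓ)) m (fun d => if A d then 1 else 0)) := by
  obtain ⟨hD, hS, hP⟩ := h
  have hr (ℓ : ℕ) : 0 ≤ Γ1 ^ ℓ * Γ0 ^ (L - ℓ) ∧ Γ1 ^ ℓ * Γ0 ^ (L - ℓ) ≤ 1 :=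
    ⟨by positivity, mul_le_one₀ (pow_le_one₀ hΓ1 hΓ1') (by positivity) (pow_le_one₀ hΓ0 hΓ0')⟩
  have hmeas (ℓ d : ℕ) : MeasurableSet {ω | D ω = d ∧ S ω = ℓ} :=
    (hD (measurableSet_singleton d)).inter (hS (measurableSet_singleton ℓ))
  have lower (B : ℕ → Prop) : bExp p L (fun ℓ =>
      bExp (Γ1 ^ ℓ * Γ0 ^ (L - ℓ)) m (fun d => if B d then 1 else 0)) ≤
        P.real {ω | B (D ω)} := by
    set F := (Finset.range (L + 1) ×ˢ Finset.range (m + 1)).filter (fun x => B x.2) with hF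
    have e : bExp p L (fun ℓ =>
      bExp (Γ1 ^ ℓ * Γ0 ^ (L - ℓ)) m (fun d => if B d then 1 else 0)) =
        ∑ x ∈ F, P.real {ω | D ω = x.2 ∧ S ω = x.1} := by
      rw [hF, Finset.sum_filter, Finset.sum_product, bExp]
      refine Finset.sum_congr rfl fun ℓ hℓ => ?_
      rw [bExp, Finset.mul_sum]
      refine Finset.sum_congr rfl fun d hd => ?_
      simp only [Finset.mem_range, Nat.lt_succ_iff] at hℓ hd
      split_ifs
      · rw [measureReal_def, hP d hd ℓ hℓ, Nat.add_sub_cancel, ENNReal.toReal_ofReal]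
        · ring
        · have h1 : 0 ≤ 1 - p := by linarith
          have h2 : 0 ≤ 1 - Γ1 ^ ℓ * Γ0 ^ (L - ℓ) := by linarith [(hr ℓ).2]
          positivity
      · simp
    rw [e, ← measureReal_biUnion_finset]
    · refine measureReal_mono ?_
      intro ω hω
      simp only [Set.mem_iUnion] at hω
      obtain ⟨x, hx, h1, h2⟩ := hω
      simp only [Set.mem_ofPred_eq, h1]
      exact (Finset.mem_filter.1 hx).2
    · rintro ⟨a, b⟩ _ ⟨c, d⟩ _ hne
      refine Set.disjoint_left.2 fun ω h1 h2 => hne ?_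
      simp only [Set.mem_ofPred_eq] at h1 h2
      rw [← h1.1, ← h1.2, ← h2.1, ← h2.2]
    · exact fun x _ => hmeas x.1 x.2
  have hA := lower A
  have hA' := lower (fun d => ¬ A d)
  have hsub : bExp p L (fun ℓ => bExp (Γ1 ^ ℓ * Γ0 ^ (L - ℓ)) m
      (fun d => 1 - if A d then 1 else 0)) ≤ P.real {ω | ¬ A (D ω)} := by
    refine le_trans (le_of_eq ?_) hA'
    congr 1; ext ℓ; congr 1; ext d
    split_ifs <;> simp_all
  simp_rw [bExp_sub, bExp_const] at hsub
  have hc : P.real {ω | ¬ A (D ω)} = 1 - P.real {ω | A (D ω)} :=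
    probReal_compl_eq_one_sub (hD (MeasurableSet.of_discrete (s := {d | A d})))
  rw [← measureReal_def]
  linarith

lemma Psi_nonneg {δ : ℝ} (hδ : 0 < δ) : 0 ≤ Psi δ := by
  have h := one_sub_inv_le_log_of_pos (show 0 < δ + 1 by linarith)
  have h2 := mul_le_mul_of_nonneg_left h (show 0 ≤ δ + 1 by linarith)
  rw [mul_sub, mul_inv_cancel₀ (by linarith)] at h2
  unfold Psi; linarith

/-- Given `S`, the degree has mean `m r` and can be replaced by `(1 ± δ) m r` up to a Chernoff error, which
is uniform while `r ≥ R`. The proposition `B` stands for the atypical values of `S`, where the trivial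
bound 1 is used. -/
lemma conditional_bounds {r R δ Y : ℝ} (hr0 : 0 ≤ r) (hr1 : r ≤ 1) (m : ℕ) (hδ : 0 < δ)
    (B : Prop) [Decidable B] (hR : ¬ B → R ≤ r) :
    bExp r m (fun d => if (d : ℝ) ≤ Y then 1 else 0) ≤
      (if (1 - δ) * (m * r) ≤ Y then 1 else 0) +
        ((if B then 1 else 0) + 2 * exp (-Psi δ * (m * R))) ∧
    (if (1 + δ) * (m * r) ≤ Y then 1 else 0) ≤
      bExp r m (fun d => if (d : ℝ) ≤ Y then 1 else 0) +
        ((if B then 1 else 0) + 2 * exp (-Psi δ * (m * R))) := by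
  have hpos := exp_pos (-Psi δ * (m * R))
  by_cases hB : B
  · rw [if_pos hB]
    have h0 : 0 ≤ bExp r m (fun d => if (d : ℝ) ≤ Y then 1 else 0) := by
      refine (bExp_const r m 0).symm.le.trans ?_
      exact bExp_mono hr0 hr1 m fun d _ => by split_ifs <;> norm_num
    have h1 : bExp r m (fun d => if (d : ℝ) ≤ Y then 1 else 0) ≤ 1 := by
      conv_rhs => rw [← bExp_const r m 1]
      exact bExp_mono hr0 hr1 m fun d _ => by split_ifs <;> norm_num
    constructor <;> split_ifs <;> linarith
  · rw [if_neg hB, zero_add]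
    have hc : 2 * exp (-Psi δ * (m * r)) ≤ 2 * exp (-Psi δ * (m * R)) := by
      have := Psi_nonneg hδ
      have := hR hB
      rw [neg_mul, neg_mul]
      gcongr
    have hch := (binom_chernoff hr0 hr1 m hδ).trans hc
    constructor
    · refine le_trans ?_ (add_le_add le_rfl hch)
      rw [← bExp_const r m (if (1 - δ) * (m * r) ≤ Y then 1 else 0), ← bExp_add]
      refine bExp_mono hr0 hr1 m fun d _ => ?_
      split_ifs with h1 h2 h3 h3 <;> norm_num
      linarith [not_lt.1 (not_or.1 h3).2]
    · refine le_trans ?_ (add_le_add le_rfl hch)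
      rw [← bExp_const r m (if (1 + δ) * (m * r) ≤ Y then 1 else 0), ← bExp_add]
      refine bExp_mono hr0 hr1 m fun d _ => ?_
      split_ifs with h1 h2 h3 h3 <;> norm_num
      linarith [not_lt.1 (not_or.1 h3).1]

/-- The distribution function of the compound degree lies between those of `(1 ± δ) m Γ(1)^S Γ(0)^(L - S)`, up
to the Hoeffding error for `|S - L p| > L η` and the Chernoff error on the typical event. -/
lemma unconditional_bounds {p Γ1 Γ0 η δ Y R : ℝ} (hp0 : 0 ≤ p) (hp1 : p ≤ 1)
    (hΓ1 : 0 ≤ Γ1) (hΓ1' : Γ1 ≤ 1) (hΓ0 : 0 ≤ Γ0) (hΓ0' : Γ0 ≤ 1) (m L : ℕ) (hδ : 0 < δ)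
    (hη : 0 ≤ η)
    (hR : ∀ ℓ ≤ L, |(ℓ : ℝ) - L * p| ≤ L * η → R ≤ Γ1 ^ ℓ * Γ0 ^ (L - ℓ)) :
    bExp p L (fun ℓ => bExp (Γ1 ^ ℓ * Γ0 ^ (L - ℓ)) m (fun d => if (d : ℝ) ≤ Y then 1 else 0)) ≤
      bExp p L (fun ℓ => if (1 - δ) * (m * (Γ1 ^ ℓ * Γ0 ^ (L - ℓ))) ≤ Y then 1 else 0) +
        (2 * exp (-2 * L * η ^ 2) + 2 * exp (-Psi δ * (m * R))) ∧
    bExp p L (fun ℓ => if (1 + δ) * (m * (Γ1 ^ ℓ * Γ0 ^ (L - ℓ))) ≤ Y then 1 else 0) ≤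
      bExp p L (fun ℓ => bExp (Γ1 ^ ℓ * Γ0 ^ (L - ℓ)) m
        (fun d => if (d : ℝ) ≤ Y then 1 else 0)) +
        (2 * exp (-2 * L * η ^ 2) + 2 * exp (-Psi δ * (m * R))) := by
  have hr (ℓ : ℕ) : 0 ≤ Γ1 ^ ℓ * Γ0 ^ (L - ℓ) ∧ Γ1 ^ ℓ * Γ0 ^ (L - ℓ) ≤ 1 :=
    ⟨by positivity, mul_le_one₀ (pow_le_one₀ hΓ1 hΓ1') (by positivity) (pow_le_one₀ hΓ0 hΓ0')⟩
  have hh := binom_hoeffding hp0 hp1 L hη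
  have hb (ℓ : ℕ) (hℓ : ℓ ≤ L) := conditional_bounds (R := R) (Y := Y) (hr ℓ).1 (hr ℓ).2 m hδ
    (L * η < |(ℓ : ℝ) - L * p|) (fun h => hR ℓ hℓ (not_lt.1 h))
  have h1 := bExp_mono hp0 hp1 L fun ℓ hℓ => (hb ℓ hℓ).1
  have h2 := bExp_mono hp0 hp1 L fun ℓ hℓ => (hb ℓ hℓ).2
  rw [bExp_add, bExp_add, bExp_const] at h1 h2
  constructor <;> linarith

/-! ### Reduction to the binomial Berry–Esseen bound -/

lemma pow_mul_pow_eq_exp {Γ1 Γ0 : ℝ} (h1 : 0 < Γ1) (h0 : 0 < Γ0) {ℓ L : ℕ} (h : ℓ ≤ L) :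
    Γ1 ^ ℓ * Γ0 ^ (L - ℓ) = exp (ℓ * log Γ1 + (L - ℓ) * log Γ0) := by
  rw [exp_add, ← Nat.cast_sub h, exp_nat_mul, exp_nat_mul, exp_log h1, exp_log h0]

/-- The event of the rescaled degree, solved for the degree. -/
lemma degree_event_iff {x b q : ℝ} (hx : 0 ≤ x) (hq : 0 < q) (d : ℕ) :
    (d : ℝ) ^ q⁻¹ * exp (-q * b) ≤ x ↔ (d : ℝ) ≤ (x * exp (q * b)) ^ q := by
  rw [← rpow_inv_le_iff_of_pos (Nat.cast_nonneg d) (by positivity) hq, ← div_le_iff₀ (exp_pos _),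
    div_eq_mul_inv, ← exp_neg, neg_mul]

/-- After taking logarithms, the event that the approximate degree `a M Γ(1)^ℓ Γ(0)^(L - ℓ)` is below the
threshold is a half-line for the standardized `ℓ`; the factor `a` and the ratio of `n'` to `M` only
shift its endpoint by a multiple of `1 / √L`. -/
lemma threshold_iff {p Γ1 Γ0 a M n' x σ₀ : ℝ} (h1 : 0 < Γ1) (h0 : 0 < Γ0) {ℓ L : ℕ}
    (h : ℓ ≤ L) (hL : 0 < L) (ha : 0 < a) (hM : 0 < M) (hx : 0 < x) (hσ : 0 < σ₀) :
    a * (M * (Γ1 ^ ℓ * Γ0 ^ (L - ℓ))) ≤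
        (x * exp (√L * ((L / log n')⁻¹ + (p * log Γ1 + (1 - p) * log Γ0)))) ^ √L ↔
      (σ₀ * (log Γ1 - log Γ0)) * ((ℓ - L * p) / (√L * σ₀)) ≤
        log x + (log n' - log (a * M)) / √L := by
  have hL' : (0 : ℝ) < L := Nat.cast_pos.2 hL
  have hs : 0 < √(L : ℝ) := Real.sqrt_pos.2 hL'
  have hss : √(L : ℝ) * √L = L := Real.mul_self_sqrt hL'.le
  set q := √(L : ℝ) with hq
  have e1 : (x * exp (q * ((L / log n')⁻¹ + (p * log Γ1 + (1 - p) * log Γ0)))) ^ q =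
      exp (q * log x + log n' + L * (p * log Γ1 + (1 - p) * log Γ0)) := by
    rw [← exp_log hx, ← exp_add, ← exp_mul, log_exp, inv_div, ← hss]
    congr 1; field_simp; ring
  rw [e1, pow_mul_pow_eq_exp h1 h0 h, ← mul_assoc]
  nth_rw 1 [← exp_log (mul_pos ha hM)]
  rw [← exp_add, exp_le_exp]
  have e2 : (σ₀ * (log Γ1 - log Γ0)) * ((ℓ - L * p) / (q * σ₀)) =
      ((log Γ1 - log Γ0) * (ℓ - L * p)) / q := by field_simp
  have e3 : log x + (log n' - log (a * M)) / q = (q * log x + (log n' - log (a * M))) / q := by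
    field_simp
  rw [e2, e3, div_le_div_iff_of_pos_right hs]
  constructor <;> intro <;> linarith

/-- Every typical `ℓ` has connection probability at least that of the worst case, in which both exponents
are raised by `L η`. -/
lemma typical_lower_bound {p Γ1 Γ0 η : ℝ} (h1 : 0 < Γ1) (h0 : 0 < Γ0) (h1' : Γ1 < 1)
    (h0' : Γ0 < 1) {ℓ L : ℕ} (h : ℓ ≤ L) (hd : |(ℓ : ℝ) - L * p| ≤ L * η) :
    (Γ1 ^ (p + η) * Γ0 ^ (1 - p + η)) ^ L ≤ Γ1 ^ ℓ * Γ0 ^ (L - ℓ) := by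
  rw [pow_mul_pow_eq_exp h1 h0 h, rpow_def_of_pos h1, rpow_def_of_pos h0, ← exp_add,
    ← exp_nat_mul, exp_le_exp]
  have g1 := log_neg h1 h1'
  have g0 := log_neg h0 h0'
  obtain ⟨ha, hb⟩ := abs_le.1 hd
  nlinarith

lemma abs_log_ratio_le {δ M : ℝ} (hδ : 0 < δ) (hδ1 : δ < 1) (hM : 0 < M) :
    |log (M + 1) - log ((1 - δ) * M)| ≤ log ((1 + δ) / (1 - δ) * ((M + 1) / M)) ∧
    |log (M + 1) - log ((1 + δ) * M)| ≤ log ((1 + δ) / (1 - δ) * ((M + 1) / M)) := by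
  have a1 : 0 < 1 - δ := by linarith
  have a2 : 0 < 1 + δ := by linarith
  have a3 : 0 < M + 1 := by linarith
  rw [log_mul a1.ne' hM.ne', log_mul a2.ne' hM.ne', log_mul (by positivity) (by positivity),
    log_div a2.ne' a1.ne', log_div a3.ne' hM.ne']
  have l1 : log (1 - δ) ≤ 0 := log_nonpos a1.le (by linarith)
  have l2 : 0 ≤ log (1 + δ) := log_nonneg (by linarith)
  have l3 : log M ≤ log (M + 1) := log_le_log hM (by linarith)
  exact ⟨abs_le.2 ⟨by linarith, by linarith⟩, abs_le.2 ⟨by linarith, by linarith⟩⟩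

/-- Berry–Esseen for the approximate degree, together with the Lipschitz bound on `Φ` that absorbs the
shift of the endpoint found in `threshold_iff`. -/
lemma shifted_comparison {p Γ1 Γ0 a M n' x σ₀ T : ℝ} (hp0 : 0 < p) (hp1 : p < 1) (h1 : 0 < Γ1)
    (h0 : 0 < Γ0) (hne : log Γ1 - log Γ0 ≠ 0) {L : ℕ} (hL : 0 < L) (ha : 0 < a) (hM : 0 < M)
    (hx : 0 < x) (hσ : 0 < σ₀) (hσ2 : σ₀ ^ 2 = p * (1 - p))
    (hT : |log n' - log (a * M)| ≤ T) :
    |bExp p L (fun ℓ => if a * (M * (Γ1 ^ ℓ * Γ0 ^ (L - ℓ))) ≤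
        (x * exp (√L * ((L / log n')⁻¹ + (p * log Γ1 + (1 - p) * log Γ0)))) ^ √L then 1 else 0) -
      Phi (log x / |σ₀ * (log Γ1 - log Γ0)|)| ≤
      9 / (√L * σ₀) + (√(2 * π))⁻¹ * (T / (√L * |σ₀ * (log Γ1 - log Γ0)|)) := by
  have hL' : (0 : ℝ) < L := Nat.cast_pos.2 hL
  have hs : 0 < √(L : ℝ) := Real.sqrt_pos.2 hL'
  set κ := σ₀ * (log Γ1 - log Γ0) with hκ
  have hκ0 : κ ≠ 0 := mul_ne_zero hσ.ne' hne
  have hκp : 0 < |κ| := abs_pos.2 hκ0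
  have e : bExp p L (fun ℓ => if a * (M * (Γ1 ^ ℓ * Γ0 ^ (L - ℓ))) ≤
        (x * exp (√L * ((L / log n')⁻¹ + (p * log Γ1 + (1 - p) * log Γ0)))) ^ √L
          then (1 : ℝ) else 0) =
      bExp p L (fun ℓ => if κ * ((ℓ - L * p) / (√L * σ₀)) ≤
        log x + (log n' - log (a * M)) / √L then (1 : ℝ) else 0) := by
    refine Finset.sum_congr rfl fun ℓ hℓ => ?_
    have hℓ : ℓ ≤ L := by simpa [Nat.lt_succ_iff] using hℓ
    simp only [threshold_iff h1 h0 hℓ hL ha hM hx hσ, hκ]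
  rw [e]
  have hbe := binom_berry_esseen_scaled hp0 hp1 hL (√L * σ₀) (by positivity)
    (by rw [mul_pow, hσ2, Real.sq_sqrt hL'.le]; ring) hκ0
    (log x + (log n' - log (a * M)) / √L)
  have hl := Phi_lipschitz (log x / |κ|) ((log x + (log n' - log (a * M)) / √L) / |κ|)
  have e2 : (log x + (log n' - log (a * M)) / √L) / |κ| - log x / |κ| =
      (log n' - log (a * M)) / (√L * |κ|) := by field_simp; ring
  rw [e2, abs_div, abs_of_pos (mul_pos hs hκp)] at hl
  refine (abs_sub_le _ _ _).trans (add_le_add hbe (hl.trans ?_))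
  gcongr

/-- The estimate at a fixed `x ≥ 0`, with `n = m + 1`. -/
lemma cdf_difference_bound {Ω : Type*} [MeasurableSpace Ω] (P : Measure Ω)
    [IsProbabilityMeasure P] {p Γ1 Γ0 : ℝ} (hp0 : 0 < p) (hp1 : p < 1) (h1 : 0 < Γ1)
    (h1' : Γ1 < 1) (h0 : 0 < Γ0) (h0' : Γ0 < 1) (hne : Γ0 ≠ Γ1) {m L : ℕ} (hm : 0 < m)
    (hL : 0 < L) {D S : Ω → ℕ}
    (h : IsCompoundBinomialPair P p (1 - p) Γ1 Γ0 (m + 1) L D S) {δ η : ℝ} (hδ : 0 < δ)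
    (hδ1 : δ < 1) (hη : 0 < η) {x : ℝ} (hx : 0 ≤ x) :
    |(P {ω | (D ω : ℝ) ^ (√L)⁻¹ * exp (-√L * (((L : ℝ) / log (m + 1))⁻¹ +
        (p * log Γ1 + (1 - p) * log Γ0))) ≤ x}).toReal -
      (gaussianReal 0 1 {z | (Γ1 / Γ0) ^ (√((1 - p) * p) * z) ≤ x}).toReal| ≤
    (√(2 * π))⁻¹ * (log ((1 + δ) / (1 - δ) * (((m : ℝ) + 1) / m)) /
        (√L * |√((1 - p) * p) * (log Γ1 - log Γ0)|)) +
      9 / (√L * √((1 - p) * p)) +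
      (2 * exp (-2 * L * η ^ 2) +
        2 * exp (-Psi δ * (m * (Γ1 ^ (p + η) * Γ0 ^ (1 - p + η)) ^ L))) := by
  have hL' : (0 : ℝ) < L := Nat.cast_pos.2 hL
  have hm' : (0 : ℝ) < m := Nat.cast_pos.2 hm
  have hs : 0 < √(L : ℝ) := Real.sqrt_pos.2 hL'
  have hpp : 0 < (1 - p) * p := mul_pos (by linarith) hp0
  set σ₀ := √((1 - p) * p) with hσ₀
  have hσ : 0 < σ₀ := Real.sqrt_pos.2 hpp
  have hσ2 : σ₀ ^ 2 = p * (1 - p) := by rw [hσ₀, Real.sq_sqrt hpp.le, mul_comm]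
  have hlog : log Γ1 - log Γ0 ≠ 0 := fun hh => hne (log_injOn_pos h0 h1 (by linarith))
  obtain ⟨t1, t2⟩ := abs_log_ratio_le hδ hδ1 hm'
  have hT := (abs_nonneg _).trans t1
  have hκp : 0 < |σ₀ * (log Γ1 - log Γ0)| := abs_pos.2 (mul_ne_zero hσ.ne' hlog)
  simp_rw [degree_event_iff hx hs]
  rw [compound_law P hp0.le hp1.le h1.le h1'.le h0.le h0'.le h
    (fun d => (d : ℝ) ≤ (x * exp (√L * (((L : ℝ) / log (m + 1))⁻¹ +
        (p * log Γ1 + (1 - p) * log Γ0)))) ^ √L)]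
  obtain ⟨u, l⟩ := unconditional_bounds (Y := (x * exp (√L * (((L : ℝ) / log (m + 1))⁻¹ +
        (p * log Γ1 + (1 - p) * log Γ0)))) ^ √L) hp0.le hp1.le h1.le h1'.le h0.le h0'.le m L hδ
    hη.le (fun ℓ hℓ hd => typical_lower_bound h1 h0 h1' h0' hℓ hd)
  have p1 : 0 ≤ (√(2 * π))⁻¹ * (log ((1 + δ) / (1 - δ) * (((m : ℝ) + 1) / m)) /
        (√L * |σ₀ * (log Γ1 - log Γ0)|)) := by positivity
  have p2 : 0 ≤ 9 / (√L * σ₀) := by positivity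
  -- At `x = 0` the value `log 0 = 0` is junk, so the logarithmic form of the events is not available. There
  -- the Gaussian probability and the one for the approximate degree both vanish.
  rcases hx.eq_or_lt with rfl | hx
  · have hg : {z : ℝ | (Γ1 / Γ0) ^ (σ₀ * z) ≤ 0} = ∅ := by
      ext z
      simpa using rpow_pos_of_pos (div_pos h1 h0) (σ₀ * z)
    rw [hg, measure_empty, ENNReal.toReal_zero, sub_zero]
    simp only [zero_mul, zero_rpow hs.ne'] at u l ⊢
    have hz (c : ℝ) (hc : 0 < c) :
        bExp p L (fun ℓ => if c * (m * (Γ1 ^ ℓ * Γ0 ^ (L - ℓ))) ≤ 0 then 1 else 0) = 0 := by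
      refine (congrArg (bExp p L) (funext fun ℓ => ?_)).trans (bExp_const p L 0)
      exact if_neg (not_le.2 (by positivity))
    rw [hz _ (by linarith)] at u l
    exact abs_le.2 ⟨by linarith, by linarith⟩
  · have hg : {z : ℝ | (Γ1 / Γ0) ^ (σ₀ * z) ≤ x} =
        {z : ℝ | σ₀ * (log Γ1 - log Γ0) * z ≤ log x} := by
      ext z
      simp only [Set.mem_ofPred_eq]
      rw [rpow_def_of_pos (div_pos h1 h0), ← le_log_iff_exp_le hx, log_div h1.ne' h0.ne']
      ring_nf
    rw [hg, gaussian_halfline (mul_ne_zero hσ.ne' hlog)]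
    have b1 := abs_le.1 (shifted_comparison hp0 hp1 h1 h0 hlog hL
      (show 0 < 1 - δ by linarith) hm' hx hσ hσ2 t1)
    have b2 := abs_le.1 (shifted_comparison hp0 hp1 h1 h0 hlog hL
      (show 0 < 1 + δ by linarith) hm' hx hσ hσ2 t2)
    exact abs_le.2 ⟨by linarith [b2.1], by linarith [b1.2]⟩

/-- Berry–Esseen type estimate: there is a universal constant `C*`
such that for all admissible models, all `n ≥ 2`, `δ ∈ (0,1)` and `η ∈ (0, μ1)`,
`sup_{x ≥ 0} |Δ_n(x)|` is bounded by the explicit four-term expression. -/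
theorem stmt10 :
    ∃ C : ℝ, 0 < C ∧
      ∀ (Ω : Type u) (_ : MeasurableSpace Ω) (P : Measure Ω), IsProbabilityMeasure P →
      ∀ μ0 μ1 Γ0 Γ1 : ℝ, μ0 ∈ Set.Ioo (0:ℝ) 1 → μ1 ∈ Set.Ioo (0:ℝ) 1 → μ0 + μ1 = 1 →
        Γ0 ∈ Set.Ioo (0:ℝ) 1 → Γ1 ∈ Set.Ioo (0:ℝ) 1 → Γ0 ≠ Γ1 →
      ∀ ρ : ℝ, 0 < ρ → 0 < 1 + ρ * Real.log (Γ1 ^ μ1 * Γ0 ^ μ0) →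
      ∀ L : ℕ → ℕ, IsAdmissible ρ L →
      ∀ D S : ℕ → Ω → ℕ,
        (∀ n, 2 ≤ n → IsCompoundBinomialPair P μ1 μ0 Γ1 Γ0 n (L n) (D n) (S n)) →
      ∀ n : ℕ, 2 ≤ n → ∀ δ ∈ Set.Ioo (0:ℝ) 1, ∀ η ∈ Set.Ioo (0:ℝ) μ1,
        (⨆ x : {x : ℝ // 0 ≤ x},
          |(P {ω | (D n ω : ℝ) ^ ((Real.sqrt (L n))⁻¹) *
              Real.exp (- Real.sqrt (L n) *
                ((((L n : ℝ) / Real.log n))⁻¹ + Real.log (Γ1 ^ μ1 * Γ0 ^ μ0))) ≤ x.1}).toReal -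
           (gaussianReal 0 1
              {z | (Γ1 / Γ0) ^ (Real.sqrt (μ0 * μ1) * z) ≤ x.1}).toReal|) ≤
          (Real.sqrt (2 * Real.pi *
              (Real.sqrt (μ0 * μ1) * Real.log (Γ1 / Γ0)) ^ 2 * (L n)))⁻¹ *
            Real.log ((1 + δ) / (1 - δ) * ((n : ℝ) / ((n : ℝ) - 1))) +
          3 * C / Real.sqrt (L n) * ((μ1 ^ 2 + μ0 ^ 2) / Real.sqrt (μ1 * μ0)) +
          4 * Real.exp (-2 * (L n) * η ^ 2) +
          2 * Real.exp (-Psi δ * ((n : ℝ) - 1) *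
            (Γ1 ^ (μ1 + η) * Γ0 ^ (μ0 + η)) ^ (L n)) := by
  -- The Berry–Esseen constant 9 is at most `3 * 6 * (p ^ 2 + (1 - p) ^ 2)`, since the sum of squares is at
  -- least `1 / 2`.
  refine ⟨6, by norm_num, ?_⟩
  intro Ω _ P hP μ0 p Γ0 Γ1 _ hp hsum hΓ0 hΓ1 hne ρ _ _ L hL D S hDS n hn δ hδ η hη
  obtain rfl : μ0 = 1 - p := by linarith
  obtain ⟨m, rfl⟩ : ∃ m, n = m + 1 := ⟨n - 1, by omega⟩
  have hpair := hDS (m + 1) hn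
  have hLp := hL.1 (m + 1)
  set N := L (m + 1)
  have hs : 0 < √(N : ℝ) := Real.sqrt_pos.2 (Nat.cast_pos.2 hLp)
  have hpp : 0 < (1 - p) * p := mul_pos (by linarith [hp.2]) hp.1
  have hσ : 0 < √((1 - p) * p) := Real.sqrt_pos.2 hpp
  have : Nonempty {x : ℝ // 0 ≤ x} := ⟨⟨0, le_rfl⟩⟩
  refine ciSup_le fun x => ?_
  have hmain := cdf_difference_bound P hp.1 hp.2 hΓ1.1 hΓ1.2 hΓ0.1 hΓ0.2 hne
    (show 0 < m by omega) hLp hpair hδ.1 hδ.2 hη.1 x.2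
  rw [log_mul (rpow_pos_of_pos hΓ1.1 _).ne' (rpow_pos_of_pos hΓ0.1 _).ne', log_rpow hΓ1.1,
    log_rpow hΓ0.1, log_div hΓ1.1.ne' hΓ0.1.ne', mul_comm p (1 - p)]
  push_cast
  rw [add_sub_cancel_right]
  refine hmain.trans ?_
  have hsq (κ : ℝ) : √(2 * π * κ ^ 2 * N) = √(2 * π) * |κ| * √N := by
    rw [Real.sqrt_mul (show 0 ≤ 2 * π * κ ^ 2 by positivity),
      Real.sqrt_mul (show 0 ≤ 2 * π by positivity), Real.sqrt_sq_eq_abs]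
  rw [hsq]
  have i1 : (√(2 * π))⁻¹ * (log ((1 + δ) / (1 - δ) * (((m : ℝ) + 1) / m)) /
        (√N * |√((1 - p) * p) * (log Γ1 - log Γ0)|)) =
      (√(2 * π) * |√((1 - p) * p) * (log Γ1 - log Γ0)| * √N)⁻¹ *
        log ((1 + δ) / (1 - δ) * (((m : ℝ) + 1) / m)) := by
    rw [mul_inv, mul_inv, div_eq_mul_inv, mul_inv]; ring
  have i2 : 9 / (√N * √((1 - p) * p)) ≤
      3 * 6 / √N * ((p ^ 2 + (1 - p) ^ 2) / √((1 - p) * p)) := by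
    rw [div_mul_div_comm]
    gcongr
    nlinarith [sq_nonneg (2 * p - 1)]
  have i3 : 0 < exp (-2 * N * η ^ 2) := exp_pos _
  rw [i1, mul_assoc (-Psi δ)]
  linarith
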